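/- Define polynomials P_d ∈ ℝ[t] recursively by P₀ = 1, P₁(t) = t, and P_d(t) = t^d/d! − Σ_{k=1}^{⌊d/2⌋} (1/(k!·2^k)) · P_{d−2k}(t) for d ≥ 2. For N ∈ ℕ let E_N denote the average with respect to the uniform probability measure on the Boolean cube {−1,1}^N. Then for every integer d ≥ 1: lim_{N→∞} N^{−d/2} · E_N[ |Σ_{S⊆{1,…,N}, |S|=d} ∏_{i∈S} x_i| ] = lim_{N→∞} N^{−d/2} · E_N[ |Σ_{S⊆{1,…,N}, |S|≤d} ∏_{i∈S} x_i| ] = (1/√(2π)) ∫_ℝ |P_d(t)| e^{−t²/2} dt. In particular, for d = 2 both limits equal √(2/(π e)). -/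

import Mathlib

/-!
For signs `x₁, …, x_N` with sum `S`, the elementary symmetric polynomials satisfy
`(k + 2) e_{k+2} = S e_{k+1} - (N - k) e_k` (`esym_rec`). Hence `N^(-d/2) e_d(x) = R_d(T)`, where
`T = S / √N` and `R_d` is given by the recursion `(d + 2) R_{d+2} = T R_{d+1} - (1 - d / N) R_d`
(`normR`, `esym_eq_normR`). As `N → ∞` this becomes the Hermite recursion, whose solution is `P_d`
(`boolP_eq_normR`).

By the central limit theorem `T` converges in law to a standard Gaussian (`tendsto_cubeLawP`).
Since `T` is sub-Gaussian uniformly in `N`, all its moments are bounded; this permits replacing `R_d`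
by `P_d` at cost `O(1/N)` and passing to the limit in `E |P_d(T)|` by truncation
(`integral_abs_normR_tendsto`), which is the homogeneous limit. For degree at most `d`, each part of
degree `k < d` has first absolute moment `O(N^(k/2))`, so only the top degree contributes. For `d = 2`
the integral is evaluated with the antiderivative `t exp(-t²/2)` of `(1 - t²) exp(-t²/2)`.
-/

open Filter Topology

/-- The polynomials `P_d` defined recursively by `P₀ = 1`, `P₁(t) = t` and
`P_d(t) = t^d/d! − ∑_{k=1}^{⌊d/2⌋} (1/(k!·2^k)) P_{d−2k}(t)` for `d ≥ 2`. -/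
noncomputable def boolP : ℕ → ℝ → ℝ
  | 0 => fun _ => 1
  | 1 => fun t => t
  | (d + 2) => fun t =>
      t ^ (d + 2) / (Nat.factorial (d + 2) : ℝ) -
        ∑ k ∈ (Finset.Icc 1 ((d + 2) / 2)).attach,
          (1 / ((Nat.factorial k.1 : ℝ) * 2 ^ k.1)) * boolP (d + 2 - 2 * k.1) t
  decreasing_by
    have hk := k.2
    rw [Finset.mem_Icc] at hk
    omega

/-- The average of a function over the `N`-dimensional Boolean cube `{-1,1}^N` with
respect to the uniform probability measure. -/
noncomputable def cubeAvg (N : ℕ) (f : (Fin N → ℤ) → ℝ) : ℝ :=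
  ((2 : ℝ) ^ N)⁻¹ * ∑ x ∈ Fintype.piFinset (fun _ : Fin N => ({-1, 1} : Finset ℤ)), f x

open MeasureTheory ProbabilityTheory

/-! ### The rescaled elementary symmetric polynomials and the polynomials `P_d` -/

/-- The polynomials in `t`, depending on a parameter `ε`, with `R_0 = 1`, `R_1 = t` and
`(d + 2) R_{d+2} = t R_{d+1} - (1 - d ε) R_d`. For `ε = 1 / N` they express the `d`-th elementary
symmetric polynomial of signs `x₁, …, x_N` through the sum of these signs (`esym_eq_normR`); for
`ε = 0` they are the Hermite polynomials divided by `d!`, that is, the `P_d` (`boolP_eq_normR`). -/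
noncomputable def normR (ε t : ℝ) : ℕ → ℝ
  | 0 => 1
  | 1 => t
  | (d + 2) => (t * normR ε t (d + 1) - (1 - d * ε) * normR ε t d) / (d + 2)

/-- `R_{n - 2k}` at `ε = 0`, extended by `0` to indices `2k > n`. -/
noncomputable def normRExt (t : ℝ) (n k : ℕ) : ℝ :=
  if 2 * k ≤ n then normR 0 t (n - 2 * k) else 0

lemma normRExt_rec (t : ℝ) (n k : ℕ) :
    ((n : ℝ) + 1 - 2 * k) * normRExt t (n + 1) k
      = t * normRExt t n k - normRExt t (n + 1) (k + 1) := by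
  unfold normRExt
  rcases lt_or_ge n (2 * k) with h | h
  · rcases Nat.lt_or_ge (n + 1) (2 * k) with h' | h'
    · rw [if_neg (by omega), if_neg (by omega), if_neg (by omega)]; ring
    · have : (n : ℝ) + 1 = 2 * k := by exact_mod_cast (by omega : n + 1 = 2 * k)
      rw [if_neg (by omega : ¬ 2 * k ≤ n), if_neg (by omega : ¬ 2 * (k + 1) ≤ n + 1), this]
      ring
  · obtain ⟨j, rfl⟩ := Nat.exists_eq_add_of_le h
    rw [if_pos (by omega), if_pos (by omega)]
    rcases j with _ | j
    · rw [if_neg (by omega)]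
      have h1 : 2 * k + 0 + 1 - 2 * k = 1 := by omega
      have h2 : 2 * k + 0 - 2 * k = 0 := by omega
      rw [h1, h2]
      simp [normR]
    · rw [if_pos (by omega)]
      have h1 : 2 * k + (j + 1) + 1 - 2 * k = j + 2 := by omega
      have h2 : 2 * k + (j + 1) - 2 * k = j + 1 := by omega
      have h3 : 2 * k + (j + 1) + 1 - 2 * (k + 1) = j := by omega
      rw [h1, h2, h3, normR]
      push_cast
      field_simp
      ring

/-- The Hermite expansion `t^n / n! = ∑_k R_{n-2k}(t) / (k! 2^k)` of a monomial. Calling the right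
side `F_n`, the three-term recursion gives `(n + 1) F_{n+1} = t F_n`, because
`2 (k + 1) / ((k + 1)! 2^(k+1)) = 1 / (k! 2^k)` makes the other two sums telescope. -/
lemma sum_normRExt (t : ℝ) (n M : ℕ) (hM : n < 2 * M) :
    ∑ k ∈ Finset.range M, (1 / ((Nat.factorial k : ℝ) * 2 ^ k)) * normRExt t n k
      = t ^ n / (Nat.factorial n : ℝ) := by
  induction n with
  | zero =>
    obtain ⟨M, rfl⟩ : ∃ m, M = m + 1 := ⟨M - 1, by omega⟩
    rw [Finset.sum_range_succ', Finset.sum_eq_zero]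
    · simp [normRExt, normR]
    · intro k _
      simp [normRExt]
  | succ n ih =>
    have ih := ih (by omega)
    obtain ⟨M, rfl⟩ : ∃ m, M = m + 1 := ⟨M - 1, by omega⟩
    set a : ℕ → ℝ := fun k => 1 / ((Nat.factorial k : ℝ) * 2 ^ k) with ha
    have hak : ∀ k : ℕ, 2 * ((k : ℝ) + 1) * a (k + 1) = a k := by
      intro k
      simp only [ha, Nat.factorial_succ, pow_succ]
      push_cast
      field_simp
    have key : ∀ k : ℕ, ((n : ℝ) + 1) * (a k * normRExt t (n + 1) k)
        = t * (a k * normRExt t n k) - a k * normRExt t (n + 1) (k + 1)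
          + 2 * k * a k * normRExt t (n + 1) k := by
      intro k
      linear_combination a k * normRExt_rec t n k
    have h0 : normRExt t (n + 1) (M + 1) = 0 := by
      unfold normRExt; rw [if_neg (by omega)]
    have hsum : ((n : ℝ) + 1) * ∑ k ∈ Finset.range (M + 1), a k * normRExt t (n + 1) k
        = t * ∑ k ∈ Finset.range (M + 1), a k * normRExt t n k := by
      rw [Finset.mul_sum, Finset.sum_congr rfl (fun k _ => key k), Finset.sum_add_distrib,
        Finset.sum_sub_distrib, ← Finset.mul_sum, Finset.sum_range_succ' (fun k : ℕ =>
          2 * (k : ℝ) * a k * normRExt t (n + 1) k),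
        Finset.sum_range_succ (fun k => a k * normRExt t (n + 1) (k + 1)), h0]
      have : ∀ k ∈ Finset.range M, 2 * ((k + 1 : ℕ) : ℝ) * a (k + 1) * normRExt t (n + 1) (k + 1)
          = a k * normRExt t (n + 1) (k + 1) := by
        intro k _
        rw [← hak k]; push_cast; ring
      rw [Finset.sum_congr rfl this]
      push_cast; ring
    rw [ih] at hsum
    have hn : ((n : ℝ) + 1) ≠ 0 := by positivity
    apply mul_left_cancel₀ hn
    rw [hsum, Nat.factorial_succ, pow_succ]
    push_cast
    field_simp

lemma boolP_eq_normR (t : ℝ) (d : ℕ) : boolP d t = normR 0 t d := by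
  induction d using Nat.strong_induction_on with
  | _ d ih =>
    match d, ih with
    | 0, _ => simp [boolP, normR]
    | 1, _ => simp [boolP, normR]
    | d + 2, ih =>
      rw [boolP]
      beta_reduce
      rw [Finset.sum_attach (Finset.Icc 1 ((d + 2) / 2)) (fun k =>
        (1 / ((Nat.factorial k : ℝ) * 2 ^ k)) * boolP (d + 2 - 2 * k) t)]
      rw [← sum_normRExt t (d + 2) ((d + 2) / 2 + 1) (by omega), Finset.sum_range_succ',
        ← Finset.Ico_add_one_right_eq_Icc, Finset.sum_Ico_eq_sum_range, Nat.add_sub_cancel]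
      have : ∀ k ∈ Finset.range ((d + 2) / 2),
          1 / ((Nat.factorial (k + 1) : ℝ) * 2 ^ (k + 1)) * normRExt t (d + 2) (k + 1) =
          1 / ((Nat.factorial (1 + k) : ℝ) * 2 ^ (1 + k)) * boolP (d + 2 - 2 * (1 + k)) t := by
        intro k hk
        rw [Finset.mem_range] at hk
        rw [ih _ (by omega), normRExt, if_pos (by omega), add_comm 1 k]
      rw [Finset.sum_congr rfl this]
      simp [normRExt]

/-! ### Elementary symmetric polynomials of signs -/

/-- The elementary symmetric polynomial of degree `k` in the `x i`, `i ∈ s`. -/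
def esym {ι : Type*} (x : ι → ℤ) (s : Finset ι) (k : ℕ) : ℤ :=
  ∑ S ∈ Finset.powersetCard k s, ∏ i ∈ S, x i

lemma esym_zero {ι : Type*} (x : ι → ℤ) (s : Finset ι) : esym x s 0 = 1 := by
  simp [esym]

lemma esym_one {ι : Type*} (x : ι → ℤ) (s : Finset ι) : esym x s 1 = ∑ i ∈ s, x i := by
  simp [esym, Finset.powersetCard_one]

lemma esym_insert {ι : Type*} [DecidableEq ι] (x : ι → ℤ) (s : Finset ι) (a : ι) (ha : a ∉ s)
    (k : ℕ) : esym x (insert a s) (k + 1) = esym x s (k + 1) + x a * esym x s k := by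
  unfold esym
  rw [Finset.powersetCard_succ_insert ha, Finset.sum_union, Finset.sum_image, Finset.mul_sum]
  · congr 1
    refine Finset.sum_congr rfl fun S hS => ?_
    rw [Finset.prod_insert]
    exact fun h => ha ((Finset.mem_powersetCard.1 hS).1 h)
  · intro S hS T hT h
    have hS' : a ∉ S := fun h => ha ((Finset.mem_powersetCard.1 hS).1 h)
    have hT' : a ∉ T := fun h => ha ((Finset.mem_powersetCard.1 hT).1 h)
    rw [← Finset.erase_insert hS', ← Finset.erase_insert hT', h]
  · rw [Finset.disjoint_left]
    intro S hS hS'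
    obtain ⟨T, _, rfl⟩ := Finset.mem_image.1 hS'
    exact ha ((Finset.mem_powersetCard.1 hS).1 (Finset.mem_insert_self _ _))

/-- For signs `x i`, multiplying the degree `k + 1` polynomial by the sum of the signs produces each
`(k + 2)`-set `k + 2` times and, since `x i ^ 2 = 1`, each `k`-set once for every element outside it.
The proof adds one variable at a time. -/
lemma esym_rec {ι : Type*} (x : ι → ℤ) (s : Finset ι) (hx : ∀ i ∈ s, x i ^ 2 = 1) (k : ℕ) :
    ((k : ℤ) + 2) * esym x s (k + 2)
      = (∑ i ∈ s, x i) * esym x s (k + 1) - ((s.card : ℤ) - k) * esym x s k := by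
  classical
  induction s using Finset.induction_on generalizing k with
  | empty =>
    have h : ∀ j, esym x ∅ (j + 1) = 0 := by
      intro j; rw [esym, Finset.powersetCard_eq_empty.2 (by simp), Finset.sum_empty]
    rw [h, h]
    rcases k with _ | k
    · simp
    · rw [h]; ring
  | insert a s ha ih =>
    have hxs : ∀ i ∈ s, x i ^ 2 = 1 := fun i hi => hx i (Finset.mem_insert_of_mem hi)
    have hxa : x a ^ 2 = 1 := hx a (Finset.mem_insert_self _ _)
    have ih := ih hxs
    rw [Finset.sum_insert ha, Finset.card_insert_of_notMem ha, esym_insert x s a ha,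
      esym_insert x s a ha]
    rcases k with _ | k
    · have h0 := ih 0
      rw [esym_zero, esym_zero, esym_one] at *
      push_cast at *
      linear_combination h0 - hxa
    · rw [esym_insert x s a ha]
      have h0 := ih (k + 1)
      have h1 := ih k
      push_cast at *
      linear_combination h0 + x a * h1 - esym x s (k + 1) * hxa

/-- `e_d(x) = N^(d/2) R_d(∑ x_i / √N)` with parameter `ε = 1 / N`. -/
lemma esym_eq_normR {N : ℕ} (hN : 0 < N) (x : Fin N → ℤ) (hx : ∀ i, x i ^ 2 = 1) (d : ℕ) :
    (esym x Finset.univ d : ℝ)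
      = √N ^ d * normR (N : ℝ)⁻¹ ((√N)⁻¹ * ((∑ i, x i : ℤ) : ℝ)) d := by
  have hN' : (0 : ℝ) < √N := Real.sqrt_pos.2 (by exact_mod_cast hN)
  have hsq : (√N : ℝ) ^ 2 = N := Real.sq_sqrt (Nat.cast_nonneg _)
  have hN0 : (N : ℝ) ≠ 0 := by positivity
  induction d using Nat.twoStepInduction with
  | zero => simp [esym_zero, normR]
  | one => simp only [esym_one, normR]; field_simp
  | more d h0 h1 =>
    have h := esym_rec x Finset.univ (fun i _ => hx i) d
    have h : ((d : ℝ) + 2) * (esym x Finset.univ (d + 2) : ℝ)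
      = ((∑ i, x i : ℤ) : ℝ) * esym x Finset.univ (d + 1)
        - ((N : ℝ) - d) * esym x Finset.univ d := by
      have := congrArg (Int.cast : ℤ → ℝ) h
      rw [Finset.card_univ, Fintype.card_fin] at this
      push_cast at this ⊢
      exact this
    rw [h0, h1] at h
    have hd : (d : ℝ) + 2 ≠ 0 := by positivity
    apply mul_left_cancel₀ hd
    rw [h, normR]
    generalize ((∑ i, x i : ℤ) : ℝ) = S
    generalize normR (N : ℝ)⁻¹ ((√N)⁻¹ * S) (d + 1) = A
    generalize normR (N : ℝ)⁻¹ ((√N)⁻¹ * S) d = B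
    have e : (N : ℝ)⁻¹ = (√N ^ 2)⁻¹ := by rw [hsq]
    rw [e]
    nth_rewrite 2 [← hsq]
    field_simp
    ring

lemma continuous_normR (ε : ℝ) (d : ℕ) : Continuous fun t => normR ε t d := by
  induction d using Nat.twoStepInduction with
  | zero => simpa [normR] using continuous_const
  | one => simp only [normR]; fun_prop
  | more d h0 h1 => simp only [normR]; fun_prop

/-- Polynomial growth of `R_d`, uniform in `ε ∈ [0, 1]`, and Lipschitz dependence on `ε` at `0`. -/
lemma normR_bounds (d : ℕ) : ∃ C : ℝ, 0 ≤ C ∧ ∀ ε t : ℝ, 0 ≤ ε → ε ≤ 1 →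
    |normR ε t d| ≤ C * (1 + |t|) ^ d ∧
    |normR ε t d - normR 0 t d| ≤ C * ε * (1 + |t|) ^ d := by
  induction d using Nat.twoStepInduction with
  | zero => exact ⟨1, by simp, fun ε t h0 h1 => by simp [normR, h0]⟩
  | one => exact ⟨1, by simp, fun ε t h0 h1 => by
      simp only [normR, sub_self, abs_zero]; constructor <;> [skip; positivity]; simp⟩
  | more d h0 h1 =>
    obtain ⟨A, hA, h0⟩ := h0
    obtain ⟨B, hB, h1⟩ := h1
    refine ⟨B + (1 + 2 * d) * A, by positivity, fun ε t e0 e1 => ?_⟩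
    obtain ⟨a1, a2⟩ := h0 ε t e0 e1
    obtain ⟨b1, b2⟩ := h1 ε t e0 e1
    have ht := abs_nonneg t
    set u := 1 + |t| with hu
    have hu1 : 1 ≤ u := by linarith
    have hd : (0 : ℝ) ≤ d := Nat.cast_nonneg _
    have hud : u ^ d ≤ u ^ (d + 2) := pow_le_pow_right₀ hu1 (by omega)
    have hdiv : ∀ y : ℝ, |y / ((d : ℝ) + 2)| ≤ |y| := by
      intro y
      rw [abs_div, abs_of_pos (by positivity : (0 : ℝ) < d + 2)]
      exact div_le_self (abs_nonneg _) (by linarith)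
    have htmul : ∀ y b : ℝ, 0 ≤ b → |y| ≤ b * u ^ (d + 1) → |t * y| ≤ b * u ^ (d + 2) := by
      intro y b hb hy
      rw [abs_mul]
      calc |t| * |y| ≤ u * (b * u ^ (d + 1)) := by gcongr; linarith
        _ = b * u ^ (d + 2) := by ring
    have hc : |1 - d * ε| ≤ 1 + d := by
      rw [abs_le]; constructor <;> nlinarith
    constructor
    · rw [normR]
      refine (hdiv _).trans ((abs_sub _ _).trans ?_)
      have i1 := htmul _ B hB b1
      have i2 : |(1 - d * ε) * normR ε t d| ≤ (1 + d) * (A * u ^ (d + 2)) := by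
        rw [abs_mul]; gcongr; exact a1.trans (by gcongr)
      have : 0 ≤ d * (A * u ^ (d + 2)) := by positivity
      nlinarith
    · have e : normR ε t (d + 2) - normR 0 t (d + 2) =
          (t * (normR ε t (d + 1) - normR 0 t (d + 1))
            - (normR ε t d - normR 0 t d) + d * ε * normR ε t d) / (d + 2) := by
        rw [normR, normR]; ring
      rw [e]
      refine (hdiv _).trans ((abs_add_le _ _).trans ?_)
      have i1 := htmul _ (B * ε) (by positivity) b2
      have i2 : |normR ε t d - normR 0 t d| ≤ A * ε * u ^ (d + 2) := a2.trans (by gcongr)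
      have i3 : |d * ε * normR ε t d| ≤ d * ε * (A * u ^ (d + 2)) := by
        rw [abs_mul, abs_of_nonneg (by positivity : 0 ≤ d * ε)]
        gcongr; exact a1.trans (by gcongr)
      have i4 := abs_sub (t * (normR ε t (d + 1) - normR 0 t (d + 1))) (normR ε t d - normR 0 t d)
      have : 0 ≤ d * ε * (A * u ^ (d + 2)) := by positivity
      nlinarith

lemma one_add_abs_pow_le (m : ℕ) (t : ℝ) :
    (1 + |t|) ^ m ≤ (m.factorial * Real.exp 1) * (Real.exp t + Real.exp (-t)) := by
  have h := Real.pow_div_factorial_le_exp (1 + |t|) (by positivity) m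
  rw [div_le_iff₀ (by positivity), Real.exp_add] at h
  have h2 : Real.exp |t| ≤ Real.exp t + Real.exp (-t) := by
    rcases abs_cases t with ⟨h, _⟩ | ⟨h, _⟩ <;> rw [h] <;>
      linarith [Real.exp_pos t, Real.exp_pos (-t)]
  refine h.trans ?_
  have : 0 ≤ (m.factorial : ℝ) * Real.exp 1 := by positivity
  nlinarith

/-! ### The law of the normalized sum of signs -/

/-- The normalized sum `(x₁ + ⋯ + x_N) / √N`. -/
noncomputable def cubeT (N : ℕ) (x : Fin N → ℤ) : ℝ := (√N)⁻¹ * ((∑ i, x i : ℤ) : ℝ)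

/-- The Boolean cube `{-1, 1}^N`. -/
def cube (N : ℕ) : Finset (Fin N → ℤ) := Fintype.piFinset (fun _ : Fin N => ({-1, 1} : Finset ℤ))

/-- The law of the normalized sum `cubeT N` under the uniform measure on the cube. -/
noncomputable def cubeLaw (N : ℕ) : Measure ℝ :=
  ((2 : ENNReal) ^ N)⁻¹ • ∑ x ∈ cube N, Measure.dirac (cubeT N x)

lemma card_cube (N : ℕ) : (cube N).card = 2 ^ N := by
  simp [cube, Fintype.card_piFinset]

instance (N : ℕ) : IsProbabilityMeasure (cubeLaw N) := ⟨by
  simp [cubeLaw, card_cube]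
  exact ENNReal.inv_mul_cancel (by simp) (by simp)⟩

lemma integrable_cubeLaw {E : Type*} [NormedAddCommGroup E] (N : ℕ) (f : ℝ → E) :
    Integrable f (cubeLaw N) := by
  refine Integrable.smul_measure ?_ (by simp)
  rw [integrable_finsetSum_measure]
  exact fun x _ => integrable_dirac (by simp)

lemma integral_cubeLaw {E : Type*} [NormedAddCommGroup E] [NormedSpace ℝ E] [CompleteSpace E]
    (N : ℕ) (f : ℝ → E) :
    ∫ t, f t ∂(cubeLaw N) = ((2 : ℝ) ^ N)⁻¹ • ∑ x ∈ cube N, f (cubeT N x) := by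
  rw [cubeLaw, integral_smul_measure, integral_finsetSum_measure
    (fun x _ => integrable_dirac (by simp))]
  simp

lemma sum_cube_prod {R : Type*} [CommRing R] (N : ℕ) (g : ℤ → R) :
    ∑ x ∈ cube N, ∏ i, g (x i) = (g (-1) + g 1) ^ N := by
  have := (Finset.prod_univ_sum (fun _ : Fin N => ({-1, 1} : Finset ℤ)) (fun _ j => g j)).symm
  rw [cube, this]
  simp

lemma charFun_cubeLaw (N : ℕ) (s : ℝ) :
    charFun (cubeLaw N) s = ((Complex.exp (-((√N)⁻¹ * s : ℝ) * Complex.I)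
      + Complex.exp (((√N)⁻¹ * s : ℝ) * Complex.I)) / 2) ^ N := by
  rw [charFun_apply_real, integral_cubeLaw]
  have h : ∀ x ∈ cube N, Complex.exp (s * (cubeT N x : ℝ) * Complex.I)
      = ∏ i, Complex.exp (((√N)⁻¹ * s : ℝ) * ((x i : ℤ) : ℂ) * Complex.I) := by
    intro x _
    rw [← Complex.exp_sum, ← Finset.sum_mul, ← Finset.mul_sum, cubeT]
    congr 1; push_cast; ring
  rw [Finset.sum_congr rfl h, sum_cube_prod N (fun j : ℤ =>
    Complex.exp (((√N)⁻¹ * s : ℝ) * (j : ℂ) * Complex.I)), div_pow]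
  rw [Complex.real_smul]
  push_cast
  rw [div_eq_inv_mul]
  simp

/-- The normalized sum is sub-Gaussian, from `cosh u ≤ exp (u ^ 2 / 2)`. -/
lemma integral_exp_cubeLaw (N : ℕ) (s : ℝ) :
    ∫ t, Real.exp (s * t) ∂(cubeLaw N) ≤ Real.exp (s ^ 2 / 2) := by
  rw [integral_cubeLaw]
  have h : ∀ x ∈ cube N, Real.exp (s * (cubeT N x))
      = ∏ i, Real.exp (((√N)⁻¹ * s : ℝ) * ((x i : ℤ) : ℝ)) := by
    intro x _
    rw [← Real.exp_sum, ← Finset.mul_sum, cubeT]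
    congr 1; push_cast; ring
  rw [Finset.sum_congr rfl h, sum_cube_prod N (fun j : ℤ =>
    Real.exp (((√N)⁻¹ * s : ℝ) * (j : ℝ)))]
  set u := (√N)⁻¹ * s with hu
  have e : ((2 : ℝ) ^ N)⁻¹ • (Real.exp (u * ((-1 : ℤ) : ℝ)) + Real.exp (u * ((1 : ℤ) : ℝ))) ^ N
      = Real.cosh u ^ N := by
    rw [Real.cosh_eq, div_pow, smul_eq_mul, div_eq_inv_mul]
    simp [add_comm]
  rw [e]
  refine (pow_le_pow_left₀ (Real.cosh_pos u).le (Real.cosh_le_exp_half_sq u) N).trans ?_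
  rw [← Real.exp_nat_mul, Real.exp_le_exp, hu, mul_pow, inv_pow, Real.sq_sqrt (Nat.cast_nonneg _)]
  rcases Nat.eq_zero_or_pos N with rfl | hN
  · simp; positivity
  · have : (N : ℝ) ≠ 0 := by positivity
    apply le_of_eq; field_simp

lemma integral_pow_cubeLaw (m : ℕ) : ∃ K : ℝ, 0 ≤ K ∧ ∀ N : ℕ,
    ∫ t, (1 + |t|) ^ m ∂(cubeLaw N) ≤ K := by
  refine ⟨(m.factorial * Real.exp 1) * (Real.exp (1 / 2) + Real.exp (1 / 2)), by positivity,
    fun N => ?_⟩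
  refine (integral_mono (integrable_cubeLaw N _) (integrable_cubeLaw N _)
    (one_add_abs_pow_le m)).trans ?_
  rw [integral_const_mul, integral_add (integrable_cubeLaw N _) (integrable_cubeLaw N _)]
  have h1 := integral_exp_cubeLaw N 1
  have h2 := integral_exp_cubeLaw N (-1)
  norm_num at h1 h2
  gcongr

lemma integrable_pow_gaussian (m : ℕ) :
    Integrable (fun t : ℝ => (1 + |t|) ^ m) (gaussianReal 0 1) := by
  have h1 := integrable_exp_mul_gaussianReal (μ := 0) (v := 1) 1
  have h2 := integrable_exp_mul_gaussianReal (μ := 0) (v := 1) (-1)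
  refine Integrable.mono' ((h1.add h2).const_mul (m.factorial * Real.exp 1))
    (by fun_prop) (ae_of_all _ fun t => ?_)
  rw [Real.norm_of_nonneg (by positivity)]
  simpa using one_add_abs_pow_le m t

/-- `cubeLaw N` bundled as a probability measure. -/
noncomputable def cubeLawP (N : ℕ) : ProbabilityMeasure ℝ := ⟨cubeLaw N, inferInstance⟩

/-- The standard Gaussian bundled as a probability measure. -/
noncomputable def gaussP : ProbabilityMeasure ℝ := ⟨gaussianReal 0 1, inferInstance⟩

/-- The uniform law on `{-1, 1} ⊆ ℝ`. -/
noncomputable def rademacher : Measure ℝ :=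
  (2 : ENNReal)⁻¹ • (Measure.dirac (-1) + Measure.dirac 1)

lemma integral_rademacher {E : Type*} [NormedAddCommGroup E] [NormedSpace ℝ E] [CompleteSpace E]
    (f : ℝ → E) : ∫ t, f t ∂rademacher = (2 : ℝ)⁻¹ • (f (-1) + f 1) := by
  rw [rademacher, integral_smul_measure, integral_add_measure
    (integrable_dirac (by simp)) (integrable_dirac (by simp))]
  simp

instance : IsProbabilityMeasure rademacher := ⟨by
  simp [rademacher, ENNReal.inv_two_add_inv_two]⟩

/-! ### Central limit theorem and passage to the limit in first moments -/

/-- The central limit theorem for the cube, through convergence of characteristic functions. -/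
lemma tendsto_cubeLawP : Tendsto cubeLawP atTop (𝓝 gaussP) := by
  refine ProbabilityMeasure.tendsto_of_tendsto_charFun fun t => ?_
  have h := tendsto_charFun_inv_sqrt_mul_pow (P := rademacher) (X := id) aemeasurable_id
    (by rw [integral_rademacher]; simp) (by rw [integral_rademacher]; norm_num) t
  have hg : charFun (gaussP : Measure ℝ) t = Complex.exp (-t ^ 2 / 2) := by
    change charFun (gaussianReal 0 1) t = _
    rw [charFun_gaussianReal]; simp [neg_div]
  rw [hg]
  refine h.congr fun N => ?_
  change _ = charFun (cubeLaw N) t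
  rw [charFun_cubeLaw, Measure.map_id, charFun_apply_real, integral_rademacher, Complex.real_smul,
    div_eq_inv_mul]
  simp

/-- Weak convergence upgraded to integrals of nonnegative continuous functions of polynomial
growth: `g - min g M ≤ g ^ 2 / M`, and the integrals of `g ^ 2` are uniformly bounded. -/
lemma tendsto_integral_of_sq_bound (g : ℝ → ℝ) (hg : Continuous g) (hg0 : ∀ t, 0 ≤ g t) (m : ℕ)
    (C : ℝ) (hC : ∀ t, g t ≤ C * (1 + |t|) ^ m) :
    Tendsto (fun N => ∫ t, g t ∂(cubeLaw N)) atTop (𝓝 (∫ t, g t ∂(gaussianReal 0 1))) := by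
  obtain ⟨K, hK0, hK⟩ := integral_pow_cubeLaw (m * 2)
  have hsq : ∀ t, g t ^ 2 ≤ C ^ 2 * (1 + |t|) ^ (m * 2) := by
    intro t
    rw [pow_mul, ← mul_pow]
    exact pow_le_pow_left₀ (hg0 t) (hC t) 2
  have hintsq := integrable_pow_gaussian (m * 2)
  have hint : Integrable g (gaussianReal 0 1) := by
    refine Integrable.mono' ((integrable_pow_gaussian m).const_mul C) hg.aestronglyMeasurable
      (ae_of_all _ fun t => ?_)
    rw [Real.norm_of_nonneg (hg0 t)]; exact hC t
  set L := max K (∫ t, (1 + |t|) ^ (m * 2) ∂(gaussianReal 0 1)) with hL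
  -- Truncation at height `M` costs at most `C ^ 2 * L / M`.
  have trunc : ∀ M : ℝ, 0 < M → ∀ μ : Measure ℝ, IsProbabilityMeasure μ → Integrable g μ →
      Integrable (fun t : ℝ => (1 + |t|) ^ (m * 2)) μ → ∫ t, (1 + |t|) ^ (m * 2) ∂μ ≤ L →
      |∫ t, g t ∂μ - ∫ t, min (g t) M ∂μ| ≤ C ^ 2 * L / M := by
    intro M hM μ _ h1 h2 h3
    have h4 : Integrable (fun t => min (g t) M) μ := h1.inf (integrable_const M)
    rw [← integral_sub h1 h4, abs_of_nonneg (integral_nonneg fun t => by simp)]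
    calc ∫ t, (g t - min (g t) M) ∂μ ≤ ∫ t, C ^ 2 / M * (1 + |t|) ^ (m * 2) ∂μ := by
          refine integral_mono (h1.sub h4) (h2.const_mul _) fun t => ?_
          have : g t - min (g t) M ≤ g t ^ 2 / M := by
            rw [le_div_iff₀ hM]
            rcases min_cases (g t) M with ⟨h, _⟩ | ⟨h, _⟩ <;> rw [h] <;> nlinarith [hg0 t]
          refine this.trans ?_
          rw [div_mul_eq_mul_div]
          gcongr
          exact hsq t
      _ = C ^ 2 / M * ∫ t, (1 + |t|) ^ (m * 2) ∂μ := integral_const_mul _ _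
      _ ≤ C ^ 2 / M * L := by gcongr
      _ = C ^ 2 * L / M := by ring
  rw [Metric.tendsto_atTop]
  intro ε hε
  have hL0 : 0 ≤ L := hK0.trans (le_max_left _ _)
  set M := 3 * (C ^ 2 * L + 1) / ε with hM
  have hMpos : 0 < M := by positivity
  have hsmall : C ^ 2 * L / M < ε / 3 := by
    rw [hM, div_lt_iff₀ (by positivity)]
    field_simp
    linarith
  let f : BoundedContinuousFunction ℝ ℝ := BoundedContinuousFunction.ofNormedAddCommGroup
    (fun t => min (g t) M) (by fun_prop) M (fun t => by
      rw [Real.norm_of_nonneg (le_min (hg0 t) hMpos.le)]; exact min_le_right _ _)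
  have hf := (ProbabilityMeasure.tendsto_iff_forall_integral_tendsto.1 tendsto_cubeLawP) f
  obtain ⟨N0, hN0⟩ := Metric.tendsto_atTop.1 hf (ε / 3) (by positivity)
  refine ⟨N0, fun N hN => ?_⟩
  have h1 : |∫ t, min (g t) M ∂(cubeLaw N) - ∫ t, min (g t) M ∂(gaussianReal 0 1)| < ε / 3 :=
    hN0 N hN
  have h2 := trunc M hMpos (cubeLaw N) inferInstance (integrable_cubeLaw N _)
    (integrable_cubeLaw N _) ((hK N).trans (le_max_left _ _))
  have h3 := trunc M hMpos (gaussianReal 0 1) inferInstance hint hintsq (le_max_right _ _)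
  rw [Real.dist_eq]
  rw [abs_lt] at *
  rw [abs_le] at *
  constructor <;> linarith

lemma integral_abs_normR_tendsto (d : ℕ) :
    Tendsto (fun N : ℕ => ∫ t, |normR (N : ℝ)⁻¹ t d| ∂(cubeLaw N)) atTop
      (𝓝 (∫ t, |normR 0 t d| ∂(gaussianReal 0 1))) := by
  obtain ⟨C, hC0, hC⟩ := normR_bounds d
  obtain ⟨K, hK0, hK⟩ := integral_pow_cubeLaw d
  have h1 := tendsto_integral_of_sq_bound (fun t => |normR 0 t d|) (continuous_normR 0 d).abs
    (fun t => abs_nonneg _) d C (fun t => (hC 0 t le_rfl zero_le_one).1)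
  have h2 : Tendsto (fun N : ℕ => ∫ t, |normR (N : ℝ)⁻¹ t d| ∂(cubeLaw N)
      - ∫ t, |normR 0 t d| ∂(cubeLaw N)) atTop (𝓝 0) := by
    have hlim : Tendsto (fun N : ℕ => C * (N : ℝ)⁻¹ * K) atTop (𝓝 0) := by
      simpa using (tendsto_inv_atTop_nhds_zero_nat (𝕜 := ℝ)).const_mul C |>.mul_const K
    refine squeeze_zero_norm' ?_ hlim
    filter_upwards [eventually_ge_atTop 1] with N hN
    have hN1 : (N : ℝ)⁻¹ ≤ 1 := inv_le_one_of_one_le₀ (by exact_mod_cast hN)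
    rw [← integral_sub (integrable_cubeLaw N _) (integrable_cubeLaw N _)]
    refine (norm_integral_le_integral_norm _).trans ?_
    calc ∫ t, ‖|normR (N : ℝ)⁻¹ t d| - |normR 0 t d|‖ ∂(cubeLaw N)
        ≤ ∫ t, C * (N : ℝ)⁻¹ * (1 + |t|) ^ d ∂(cubeLaw N) := by
          refine integral_mono (integrable_cubeLaw N _) (integrable_cubeLaw N _) fun t => ?_
          exact (abs_abs_sub_abs_le _ _).trans (hC _ t (by positivity) hN1).2
      _ = C * (N : ℝ)⁻¹ * ∫ t, (1 + |t|) ^ d ∂(cubeLaw N) := integral_const_mul _ _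
      _ ≤ C * (N : ℝ)⁻¹ * K := by gcongr; exact hK N
  simpa using h2.add h1

lemma integral_gaussian_eq (f : ℝ → ℝ) :
    ∫ t, f t ∂(gaussianReal 0 1)
      = (Real.sqrt (2 * Real.pi))⁻¹ * ∫ t : ℝ, f t * Real.exp (-(t ^ 2) / 2) := by
  rw [integral_gaussianReal_eq_integral_smul (by simp), ← integral_const_mul]
  congr 1
  ext t
  simp [gaussianPDFReal]
  ring

/-! ### The two limits -/

/-- The limit in the homogeneous case. -/
lemma tendsto_esym (d : ℕ) :
    Tendsto (fun N : ℕ => ((N : ℝ) ^ ((d : ℝ) / 2))⁻¹ *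
        cubeAvg N (fun x => |(esym x Finset.univ d : ℝ)|)) atTop
      (𝓝 ((Real.sqrt (2 * Real.pi))⁻¹ *
        ∫ t : ℝ, |boolP d t| * Real.exp (-(t ^ 2) / 2))) := by
  rw [← integral_gaussian_eq (fun t => |boolP d t|)]
  simp_rw [boolP_eq_normR]
  refine (integral_abs_normR_tendsto d).congr' ?_
  filter_upwards [eventually_ge_atTop 1] with N hN
  have hpos : (0 : ℝ) < √N ^ d := pow_pos (Real.sqrt_pos.2 (by exact_mod_cast hN)) d
  rw [integral_cubeLaw, Real.rpow_div_two_eq_sqrt _ (Nat.cast_nonneg _), Real.rpow_natCast]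
  change _ = _ * (((2 : ℝ) ^ N)⁻¹ * ∑ x ∈ cube N, |(esym x Finset.univ d : ℝ)|)
  rw [smul_eq_mul, mul_left_comm, Finset.mul_sum _ _ ((√N ^ d)⁻¹)]
  congr 1
  refine Finset.sum_congr rfl fun x hx => ?_
  have hx2 : ∀ i, x i ^ 2 = 1 := by
    intro i
    have := Fintype.mem_piFinset.1 hx i
    simp only [Finset.mem_insert, Finset.mem_singleton] at this
    rcases this with h | h <;> simp [h]
  rw [esym_eq_normR hN x hx2 d, abs_mul, abs_of_pos hpos, ← mul_assoc,
    inv_mul_cancel₀ hpos.ne', one_mul, cubeT]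

lemma cubeAvg_mono (N : ℕ) {f g : (Fin N → ℤ) → ℝ} (h : ∀ x, f x ≤ g x) :
    cubeAvg N f ≤ cubeAvg N g := by
  unfold cubeAvg
  gcongr
  exact h _

lemma cubeAvg_add (N : ℕ) (f g : (Fin N → ℤ) → ℝ) :
    cubeAvg N (fun x => f x + g x) = cubeAvg N f + cubeAvg N g := by
  simp [cubeAvg, Finset.sum_add_distrib, mul_add]

lemma cubeAvg_sum (N d : ℕ) (f : ℕ → (Fin N → ℤ) → ℝ) :
    cubeAvg N (fun x => ∑ k ∈ Finset.range d, f k x) = ∑ k ∈ Finset.range d, cubeAvg N (f k) := by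
  simp only [cubeAvg]
  rw [Finset.sum_comm, Finset.mul_sum]

lemma sum_card_le_eq {N : ℕ} (x : Fin N → ℤ) (d : ℕ) :
    ∑ S ∈ (Finset.univ : Finset (Fin N)).powerset.filter (fun S => S.card ≤ d), ∏ i ∈ S, x i
      = ∑ k ∈ Finset.range d, esym x Finset.univ k + esym x Finset.univ d := by
  rw [← Finset.sum_range_succ (fun k => esym x Finset.univ k)]
  have h : ∀ S ∈ (Finset.univ : Finset (Fin N)).powerset.filter (fun S => S.card ≤ d),
      S.card ∈ Finset.range (d + 1) := by
    intro S hS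
    have := (Finset.mem_filter.1 hS).2
    rw [Finset.mem_range]; omega
  rw [← Finset.sum_fiberwise_of_maps_to h]
  refine Finset.sum_congr rfl fun k hk => ?_
  rw [esym]
  refine Finset.sum_congr ?_ fun _ _ => rfl
  ext S
  rw [Finset.mem_range] at hk
  simp only [Finset.mem_filter, Finset.mem_powerset, Finset.mem_powersetCard]
  constructor
  · rintro ⟨⟨h1, _⟩, h3⟩; exact ⟨h1, h3⟩
  · rintro ⟨h1, h3⟩; exact ⟨⟨h1, by omega⟩, h3⟩

/-- The homogeneous parts of degree `k < d` have size `N^(k/2)` and so vanish after dividing by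
`N^(d/2)`. -/
lemma tendsto_lower (d k : ℕ) (hk : k < d) :
    Tendsto (fun N : ℕ => ((N : ℝ) ^ ((d : ℝ) / 2))⁻¹ *
        cubeAvg N (fun x => |(esym x Finset.univ k : ℝ)|)) atTop (𝓝 0) := by
  have h1 : Tendsto (fun N : ℕ => (N : ℝ) ^ (-(((d : ℝ) - k) / 2))) atTop (𝓝 0) := by
    have hdk : (k : ℝ) < d := by exact_mod_cast hk
    exact (tendsto_rpow_neg_atTop (by linarith)).comp tendsto_natCast_atTop_atTop
  have h2 := h1.mul (tendsto_esym k)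
  rw [zero_mul] at h2
  refine h2.congr' ?_
  filter_upwards [eventually_ge_atTop 1] with N hN
  have hN0 : (0 : ℝ) < N := by exact_mod_cast hN
  rw [← mul_assoc, ← Real.rpow_neg hN0.le, ← Real.rpow_neg hN0.le, ← Real.rpow_add hN0]
  congr 2
  ring

/-- The limit for degree at most `d`: by the triangle inequality it differs from the homogeneous one
by at most the contributions of degree `< d`. -/
lemma tendsto_sum_esym (d : ℕ) :
    Tendsto (fun N : ℕ => ((N : ℝ) ^ ((d : ℝ) / 2))⁻¹ *
        cubeAvg N (fun x =>
          |((∑ S ∈ (Finset.univ : Finset (Fin N)).powerset.filter (fun S => S.card ≤ d),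
            ∏ i ∈ S, x i : ℤ) : ℝ)|))
      atTop
      (𝓝 ((Real.sqrt (2 * Real.pi))⁻¹ *
        ∫ t : ℝ, |boolP d t| * Real.exp (-(t ^ 2) / 2))) := by
  have herr : Tendsto (fun N : ℕ => ∑ k ∈ Finset.range d, ((N : ℝ) ^ ((d : ℝ) / 2))⁻¹ *
      cubeAvg N (fun x => |(esym x Finset.univ k : ℝ)|)) atTop (𝓝 0) := by
    have := tendsto_finsetSum (Finset.range d) fun k hk =>
      tendsto_lower d k (Finset.mem_range.1 hk)
    simpa using this
  have hmain := tendsto_esym d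
  have hlow := hmain.sub herr
  have hupp := hmain.add herr
  rw [sub_zero] at hlow
  rw [add_zero] at hupp
  have habs : ∀ (N : ℕ) (x : Fin N → ℤ),
      |((∑ k ∈ Finset.range d, esym x Finset.univ k : ℤ) : ℝ)|
        ≤ ∑ k ∈ Finset.range d, |(esym x Finset.univ k : ℝ)| := by
    intro N x
    push_cast
    exact Finset.abs_sum_le_sum_abs _ _
  refine tendsto_of_tendsto_of_tendsto_of_le_of_le hlow hupp (fun N => ?_) (fun N => ?_)
  · beta_reduce
    rw [← Finset.mul_sum, ← mul_sub]
    refine mul_le_mul_of_nonneg_left ?_ (by positivity)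
    rw [← cubeAvg_sum, sub_le_iff_le_add, ← cubeAvg_add]
    refine cubeAvg_mono N fun x => ?_
    rw [sum_card_le_eq, Int.cast_add]
    have h1 := habs N x
    have h2 := abs_sub_abs_le_abs_sub ((esym x Finset.univ d : ℤ) : ℝ)
      (-((∑ k ∈ Finset.range d, esym x Finset.univ k : ℤ) : ℝ))
    rw [abs_neg, sub_neg_eq_add, add_comm ((esym x Finset.univ d : ℤ) : ℝ)] at h2
    linarith
  · beta_reduce
    rw [← Finset.mul_sum, ← mul_add]
    refine mul_le_mul_of_nonneg_left ?_ (by positivity)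
    rw [← cubeAvg_sum, ← cubeAvg_add]
    refine cubeAvg_mono N fun x => ?_
    rw [sum_card_le_eq, Int.cast_add]
    have h1 := habs N x
    have h2 := abs_add_le ((∑ k ∈ Finset.range d, esym x Finset.univ k : ℤ) : ℝ)
      ((esym x Finset.univ d : ℤ) : ℝ)
    linarith

/-! ### The constant for `d = 2` -/

lemma hasDerivAt_mul_exp (t : ℝ) :
    HasDerivAt (fun t : ℝ => t * Real.exp (-(t ^ 2) / 2))
      ((1 - t ^ 2) * Real.exp (-(t ^ 2) / 2)) t := by
  have h1 : HasDerivAt (fun t : ℝ => -(t ^ 2) / 2) (-t) t :=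
    (((hasDerivAt_pow 2 t).fun_neg).div_const 2).congr_deriv (by norm_num; ring)
  exact ((hasDerivAt_id' t).fun_mul h1.exp).congr_deriv (by ring)

lemma integrable_one_sub_sq_mul_exp : Integrable (fun t : ℝ => (1 - t ^ 2) * Real.exp (-(t ^ 2) / 2)) := by
  have h0 := integrable_exp_neg_mul_sq (b := 1 / 2) (by norm_num)
  have h2 := integrable_rpow_mul_exp_neg_mul_sq (b := 1 / 2) (by norm_num) (s := 2) (by norm_num)
  refine (h0.sub h2).congr (ae_of_all _ fun t => ?_)
  have e : -(t ^ 2) / 2 = -(1 / 2) * t ^ 2 := by ring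
  simp only [Pi.sub_apply, e, Real.rpow_two]
  ring

lemma integral_one_sub_sq_mul_exp : ∫ t : ℝ, (1 - t ^ 2) * Real.exp (-(t ^ 2) / 2) = 0 := by
  have hlim : Tendsto (fun t : ℝ => t * Real.exp (-(t ^ 2) / 2)) atTop (𝓝 0) := by
    have h := (rpow_mul_exp_neg_mul_sq_isLittleO_exp_neg (b := 1 / 2) (by norm_num) 1
      ).tendsto_zero_of_tendsto (Real.tendsto_exp_atBot.comp
        (tendsto_id.const_mul_atTop_of_neg (by norm_num : (-(1 / 2) : ℝ) < 0)))
    refine h.congr fun t => ?_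
    rw [Real.rpow_one]
    congr 2
    ring
  have hlim' : Tendsto (fun t : ℝ => t * Real.exp (-(t ^ 2) / 2)) atBot (𝓝 0) := by
    have := (hlim.comp tendsto_neg_atBot_atTop).neg
    simpa [Function.comp_def] using this
  rw [integral_of_hasDerivAt_of_tendsto hasDerivAt_mul_exp integrable_one_sub_sq_mul_exp hlim' hlim, sub_zero]

lemma integral_abs_boolP_two :
    (Real.sqrt (2 * Real.pi))⁻¹ * ∫ t : ℝ, |boolP 2 t| * Real.exp (-(t ^ 2) / 2)
        = Real.sqrt (2 / (Real.pi * Real.exp 1)) := by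
  -- `|t² - 1| = -(1 - t²) + 2 (1 - t²) 1_{(-1,1]}`, and the first term integrates to `0`.
  have hpt : ∀ t : ℝ, |boolP 2 t| * Real.exp (-(t ^ 2) / 2)
      = -(1 / 2) * ((1 - t ^ 2) * Real.exp (-(t ^ 2) / 2))
        + (Set.Ioc (-1 : ℝ) 1).indicator (fun t => (1 - t ^ 2) * Real.exp (-(t ^ 2) / 2)) t := by
    intro t
    have hP : boolP 2 t = (t ^ 2 - 1) / 2 := by
      rw [boolP_eq_normR]; simp [normR]; ring
    rw [hP]
    by_cases h : t ∈ Set.Ioc (-1 : ℝ) 1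
    · rw [Set.indicator_of_mem h, abs_of_nonpos (by nlinarith [h.1, h.2])]
      ring
    · rw [Set.indicator_of_notMem h, abs_of_nonneg]
      · ring
      · by_contra hlt
        have : t ^ 2 < 1 := by linarith
        have := abs_lt.1 ((sq_lt_one_iff_abs_lt_one t).1 this)
        exact h ⟨this.1, this.2.le⟩
  have hI : ∫ t in Set.Ioc (-1 : ℝ) 1, (1 - t ^ 2) * Real.exp (-(t ^ 2) / 2)
      = 2 * Real.exp (-1 / 2) := by
    rw [← intervalIntegral.integral_of_le (by norm_num),
      intervalIntegral.integral_eq_sub_of_hasDerivAt (fun t _ => hasDerivAt_mul_exp t)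
        integrable_one_sub_sq_mul_exp.intervalIntegrable]
    norm_num
    ring
  simp_rw [hpt]
  rw [integral_add (integrable_one_sub_sq_mul_exp.const_mul _) (integrable_one_sub_sq_mul_exp.indicator measurableSet_Ioc),
    integral_const_mul, integral_one_sub_sq_mul_exp, integral_indicator measurableSet_Ioc, hI]
  symm
  rw [Real.sqrt_eq_iff_mul_self_eq (by positivity) (by positivity)]
  have e1 : Real.exp (-1 / 2) * Real.exp (-1 / 2) = (Real.exp 1)⁻¹ := by
    rw [← Real.exp_add, ← Real.exp_neg]; norm_num
  have e2 : √(2 * Real.pi) * √(2 * Real.pi) = 2 * Real.pi :=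
    Real.mul_self_sqrt (by positivity)
  rw [mul_zero, zero_add, mul_mul_mul_comm, ← mul_inv, e2, mul_mul_mul_comm, e1]
  have := Real.pi_pos
  field_simp

/-- **Limits of normalized projection constants of `d`-homogeneous (resp. degree-`≤ d`)
functions on Boolean cubes.** -/
theorem stmt_19 (d : ℕ) (hd : 1 ≤ d) :
    Tendsto (fun N : ℕ => ((N : ℝ) ^ ((d : ℝ) / 2))⁻¹ *
        cubeAvg N (fun x =>
          |((∑ S ∈ Finset.powersetCard d (Finset.univ : Finset (Fin N)),
            ∏ i ∈ S, x i : ℤ) : ℝ)|))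
      atTop
      (𝓝 ((Real.sqrt (2 * Real.pi))⁻¹ *
        ∫ t : ℝ, |boolP d t| * Real.exp (-(t ^ 2) / 2))) ∧
    Tendsto (fun N : ℕ => ((N : ℝ) ^ ((d : ℝ) / 2))⁻¹ *
        cubeAvg N (fun x =>
          |((∑ S ∈ (Finset.univ : Finset (Fin N)).powerset.filter (fun S => S.card ≤ d),
            ∏ i ∈ S, x i : ℤ) : ℝ)|))
      atTop
      (𝓝 ((Real.sqrt (2 * Real.pi))⁻¹ *
        ∫ t : ℝ, |boolP d t| * Real.exp (-(t ^ 2) / 2))) ∧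
    (d = 2 →
      (Real.sqrt (2 * Real.pi))⁻¹ * ∫ t : ℝ, |boolP d t| * Real.exp (-(t ^ 2) / 2)
        = Real.sqrt (2 / (Real.pi * Real.exp 1))) := by
  refine ⟨tendsto_esym d, tendsto_sum_esym d, ?_⟩
  rintro rfl
  exact integral_abs_boolP_two
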